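/- arXiv:1412.3437 — 5 statements merged into one kernel-verified Lean document; each statement's English description precedes it below -/
import Mathlib

section
/- With p₁, …, p_N pairwise commuting orthogonal projections on a complex Hilbert space H, q_i := 1 − p_i, and P_{k,N} the symmetrized products defined below, for every integer k with 0 ≤ k ≤ N one has Σ_{i=1}^{N} q_i P_{k,N} = k · P_{k,N}; consequently Σ_{i=1}^{N} q_i = Σ_{k=0}^{N} k · P_{k,N}. -/
/-!
The `p i` generate a commutative subring of `H →L[ℂ] H`, so the claim is one about commuting
idempotents in a commutative ring. There, for each subset `S`, the product
`π_S = (∏_{i ∈ S} q_i) (∏_{i ∉ S} p_i)` satisfies `q_i π_S = π_S` for `i ∈ S` and `q_i π_S = 0` for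
`i ∉ S`; summing over `i` gives the factor `|S|` (`sum_one_sub_mul_prod`), which is the first
identity. Expanding `1 = ∏ (q_i + p_i)` shows that the `π_S` sum to `1`
(`sum_powersetCard_prod_eq_one`), and multiplying this by `∑ q_i` gives the second identity.
-/

/-- The symmetrized products
`P_{k,N} = Σ_{a ∈ {0,1}^N, Σa_i = k} Π_i q_i^{a_i} p_i^{1−a_i}` (with `q_i = 1 − p_i`),
realized as a sum over subsets `S ⊆ {1,…,N}` of cardinality `k`. -/
noncomputable def symProj {H : Type*} [NormedAddCommGroup H] [InnerProductSpace ℂ H]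
    {N : ℕ} (p : Fin N → (H →L[ℂ] H)) (k : ℕ) : H →L[ℂ] H :=
  ∑ S ∈ Finset.powersetCard k (Finset.univ : Finset (Fin N)),
    (List.ofFn (fun i : Fin N => if i ∈ S then 1 - p i else p i)).prod

theorem sum_one_sub_mul_prod {A : Type*} [CommRing A] {N : ℕ} (p : Fin N → A)
    (hp : ∀ i, IsIdempotentElem (p i)) (S : Finset (Fin N)) :
    ∑ i, (1 - p i) * ∏ j, (if j ∈ S then 1 - p j else p j) =
      (S.card : A) * ∏ j, (if j ∈ S then 1 - p j else p j) := by
  have key : ∀ i, (1 - p i) * ∏ j, (if j ∈ S then 1 - p j else p j) =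
      if i ∈ S then ∏ j, (if j ∈ S then 1 - p j else p j) else 0 := by
    intro i
    rw [← Finset.mul_prod_erase Finset.univ _ (Finset.mem_univ i), ← mul_assoc]
    split_ifs with h
    · rw [(hp i).one_sub.eq]
    · rw [sub_mul, one_mul, (hp i).eq, sub_self, zero_mul]
  simp_rw [key]
  rw [← Finset.sum_filter]
  simp

theorem sum_powersetCard_prod_eq_one {A : Type*} [CommRing A] {N : ℕ} (p : Fin N → A) :
    ∑ k ∈ Finset.range (N + 1), ∑ S ∈ Finset.powersetCard k (Finset.univ : Finset (Fin N)),
      ∏ j, (if j ∈ S then 1 - p j else p j) = 1 := by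
  have h := Finset.prod_add (fun i => 1 - p i) p Finset.univ
  simp only [sub_add_cancel, Finset.prod_const_one] at h
  rw [Finset.sum_powerset, Finset.card_univ, Fintype.card_fin] at h
  refine Eq.trans ?_ h.symm
  refine Finset.sum_congr rfl fun k _ => Finset.sum_congr rfl fun S _ => ?_
  rw [Finset.prod_ite]
  congr 2
  · ext; simp
  · ext; simp

/-- `symProj` is the image, under a ring homomorphism from a commutative ring, of the corresponding
sum of unordered products. -/
theorem symProj_eq_map {H : Type*} [NormedAddCommGroup H] [InnerProductSpace ℂ H]
    {A : Type*} [CommRing A] (φ : A →+* (H →L[ℂ] H)) {N : ℕ} (p : Fin N → A) (k : ℕ) :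
    symProj (fun i => φ (p i)) k =
      φ (∑ S ∈ Finset.powersetCard k (Finset.univ : Finset (Fin N)),
        ∏ j, (if j ∈ S then 1 - p j else p j)) := by
  rw [symProj, map_sum]
  refine Finset.sum_congr rfl fun S _ => ?_
  rw [← List.prod_ofFn, map_list_prod, List.map_ofFn]
  congr 2
  funext i
  simp only [Function.comp_apply]
  split_ifs <;> simp

/-- Commuting elements of a ring lie in the image of a commutative ring under an injective ring
homomorphism, namely the inclusion of the subring they generate. -/
theorem exists_commRing_lift.{u, v} {R : Type u} [Ring R] {ι : Type v} (p : ι → R)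
    (hcomm : ∀ i j, Commute (p i) (p j)) :
    ∃ (A : Type u) (_ : CommRing A) (φ : A →+* R) (p' : ι → A),
      Function.Injective φ ∧ p = fun i => φ (p' i) := by
  have hc : ∀ x ∈ Set.range p, ∀ y ∈ Set.range p, x * y = y * x := by
    rintro _ ⟨i, rfl⟩ _ ⟨j, rfl⟩
    exact hcomm i j
  have := Subring.isMulCommutative_closure hc
  exact ⟨Subring.closure (Set.range p),
    { (inferInstance : Ring (Subring.closure (Set.range p))) with mul_comm := mul_comm' },
    (Subring.closure (Set.range p)).subtype,
    fun i => ⟨p i, Subring.subset_closure ⟨i, rfl⟩⟩, Subtype.val_injective, rfl⟩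


/-- For pairwise commuting orthogonal projections `p₁, …, p_N` and `q_i = 1 − p_i`:
`Σ_{i=1}^{N} q_i P_{k,N} = k · P_{k,N}` for every `0 ≤ k ≤ N`, and consequently
`Σ_{i=1}^{N} q_i = Σ_{k=0}^{N} k · P_{k,N}`. -/
theorem statement2 {H : Type*} [NormedAddCommGroup H] [InnerProductSpace ℂ H]
    [CompleteSpace H] (N : ℕ) (hN : 1 ≤ N) (p : Fin N → (H →L[ℂ] H))
    (hidem : ∀ i, IsIdempotentElem (p i))
    (hsa : ∀ i, IsSelfAdjoint (p i))
    (hcomm : ∀ i j, Commute (p i) (p j)) :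
    (∀ k : ℕ, k ≤ N →
        ∑ i : Fin N, (1 - p i) * symProj p k = (k : ℂ) • symProj p k) ∧
    (∑ i : Fin N, (1 - p i) = ∑ k ∈ Finset.range (N + 1), (k : ℂ) • symProj p k) := by
  obtain ⟨A, _, φ, p', hφ, rfl⟩ := exists_commRing_lift p hcomm
  have hp' : ∀ i, IsIdempotentElem (p' i) := fun i => hφ (by rw [map_mul]; exact hidem i)
  have main : ∀ k : ℕ, ∑ i : Fin N, (1 - φ (p' i)) * symProj (fun i => φ (p' i)) k =
      (k : ℂ) • symProj (fun i => φ (p' i)) k := by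
    intro k
    rw [Nat.cast_smul_eq_nsmul, symProj_eq_map]
    simp only [← map_one φ, ← map_sub, ← map_mul, ← map_sum, ← map_nsmul]
    congr 1
    simp_rw [Finset.mul_sum]
    rw [Finset.sum_comm, Finset.smul_sum]
    refine Finset.sum_congr rfl fun S hS => ?_
    rw [sum_one_sub_mul_prod p' hp', (Finset.mem_powersetCard.mp hS).2, nsmul_eq_mul]
  refine ⟨fun k _ => main k, ?_⟩
  have one : ∑ k ∈ Finset.range (N + 1), symProj (fun i => φ (p' i)) k = 1 := by
    simp_rw [symProj_eq_map]
    rw [← map_sum, sum_powersetCard_prod_eq_one, map_one]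
  refine (mul_one (∑ i : Fin N, (1 - φ (p' i)))).symm.trans ?_
  refine (congrArg _ one.symm).trans ?_
  rw [Finset.mul_sum]
  refine Finset.sum_congr rfl fun k _ => ?_
  rw [Finset.sum_mul, main]
end

section
/- With p₁, …, p_N pairwise commuting orthogonal projections on a complex Hilbert space H and the operators f̂ := Σ_{k=0}^N f(k) P_{k,N} defined below, for all functions f, g : {0,…,N} → ℂ one has f̂ ĝ = (fg)^ = ĝ f̂ (where (fg)(k) := f(k)g(k)); moreover f̂ commutes with each projection p_j (j = 1,…,N) and with each P_{k,N} (k = 0,…,N). -/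
/-- The weighted operator `f̂ := Σ_{k=0}^N f(k) P_{k,N}`. -/
noncomputable def hatOp {H : Type*} [NormedAddCommGroup H] [InnerProductSpace ℂ H]
    {N : ℕ} (p : Fin N → (H →L[ℂ] H)) (f : ℕ → ℂ) : H →L[ℂ] H :=
  ∑ k ∈ Finset.range (N + 1), f k • symProj p k

theorem commute_ofFn_prod {A : Type*} [Monoid A] {n : ℕ} {x : A} {u : Fin n → A}
    (h : ∀ i, Commute x (u i)) : Commute x (List.ofFn u).prod := by
  refine Commute.list_prod_right _ _ fun y hy => ?_
  obtain ⟨i, rfl⟩ := (List.mem_ofFn' u y).1 hy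
  exact h i

theorem ofFn_prod_mul {A : Type*} [Monoid A] {n : ℕ} {u v : Fin n → A}
    (h : ∀ i j, Commute (u i) (v j)) :
    (List.ofFn u).prod * (List.ofFn v).prod = (List.ofFn fun i => u i * v i).prod := by
  induction n with
  | zero => simp
  | succ n ih =>
    have hc : Commute (v 0) (List.ofFn fun i : Fin n => u i.succ).prod :=
      commute_ofFn_prod fun i => (h _ _).symm
    simp only [List.ofFn_succ, List.prod_cons]
    rw [← ih fun i j => h i.succ j.succ, mul_assoc, ← mul_assoc _ (v 0), ← hc.eq]
    simp only [mul_assoc]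

section

variable {H : Type*} [NormedAddCommGroup H] [InnerProductSpace ℂ H] {N : ℕ}

/-- The summand of `symProj` belonging to a subset `S`: the product over all `i` of `1 - p i` if
`i ∈ S` and of `p i` if `i ∉ S`. -/
noncomputable def subsetProj (p : Fin N → (H →L[ℂ] H)) (S : Finset (Fin N)) : H →L[ℂ] H :=
  (List.ofFn (fun i : Fin N => if i ∈ S then 1 - p i else p i)).prod

theorem symProj_eq (p : Fin N → (H →L[ℂ] H)) (k : ℕ) :
    symProj p k = ∑ S ∈ Finset.powersetCard k (Finset.univ : Finset (Fin N)), subsetProj p S :=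
  rfl

theorem subsetProj_mul_subsetProj {p : Fin N → (H →L[ℂ] H)}
    (hidem : ∀ i, IsIdempotentElem (p i)) (hcomm : ∀ i j, Commute (p i) (p j))
    (S T : Finset (Fin N)) :
    subsetProj p S * subsetProj p T = if S = T then subsetProj p S else 0 := by
  have hc : ∀ i j, Commute (if i ∈ S then 1 - p i else p i) (if j ∈ T then 1 - p j else p j) := by
    intro i j
    have h1 : Commute (1 - p i) (p j) := (Commute.one_left _).sub_left (hcomm i j)
    have h2 : Commute (p i) (1 - p j) := (Commute.one_right _).sub_right (hcomm i j)
    have h3 : Commute (1 - p i) (1 - p j) := (Commute.one_right _).sub_right h1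
    split_ifs
    exacts [h3, h1, h2, hcomm i j]
  unfold subsetProj
  rw [ofFn_prod_mul hc]
  split_ifs with hST
  · subst hST
    congr 2
    funext i
    split_ifs
    exacts [(hidem i).one_sub.eq, (hidem i).eq]
  · obtain ⟨i, hi⟩ : ∃ i, ¬(i ∈ S ↔ i ∈ T) := by
      by_contra! h
      exact hST (Finset.ext h)
    refine List.prod_eq_zero ((List.mem_ofFn' _ _).2 ⟨i, ?_⟩)
    by_cases hS : i ∈ S <;> by_cases hT : i ∈ T
    · exact absurd (iff_of_true hS hT) hi
    · simp only [hS, hT, if_true, if_false]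
      exact (hidem i).one_sub_mul_self
    · simp only [hS, hT, if_true, if_false]
      exact (hidem i).mul_one_sub_self
    · exact absurd (iff_of_false hS hT) hi

theorem symProj_mul_symProj {p : Fin N → (H →L[ℂ] H)}
    (hidem : ∀ i, IsIdempotentElem (p i)) (hcomm : ∀ i j, Commute (p i) (p j)) (k l : ℕ) :
    symProj p k * symProj p l = if k = l then symProj p k else 0 := by
  simp only [symProj_eq, Finset.sum_mul_sum, subsetProj_mul_subsetProj hidem hcomm,
    Finset.sum_ite_eq, Finset.mem_powersetCard_univ]
  split_ifs with hkl
  · subst hkl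
    exact Finset.sum_congr rfl fun S hS => if_pos (Finset.mem_powersetCard_univ.1 hS)
  · refine Finset.sum_eq_zero fun S hS => if_neg fun h => hkl ?_
    rw [← Finset.mem_powersetCard_univ.1 hS, h]

theorem hatOp_mul_hatOp {p : Fin N → (H →L[ℂ] H)}
    (hidem : ∀ i, IsIdempotentElem (p i)) (hcomm : ∀ i j, Commute (p i) (p j)) (f g : ℕ → ℂ) :
    hatOp p f * hatOp p g = hatOp p (fun k => f k * g k) := by
  simp only [hatOp, Finset.sum_mul_sum, smul_mul_smul_comm, symProj_mul_symProj hidem hcomm,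
    smul_ite, smul_zero, Finset.sum_ite_eq]
  exact Finset.sum_congr rfl fun k hk => if_pos hk

theorem commute_hatOp {p : Fin N → (H →L[ℂ] H)} {x : H →L[ℂ] H}
    (h : ∀ k, Commute (symProj p k) x) (f : ℕ → ℂ) : Commute (hatOp p f) x :=
  Commute.sum_left _ _ _ fun k _ => (h k).smul_left (f k)

theorem commute_symProj {p : Fin N → (H →L[ℂ] H)} (hcomm : ∀ i j, Commute (p i) (p j))
    (k : ℕ) (j : Fin N) : Commute (symProj p k) (p j) := by
  refine Commute.sum_left _ _ _ fun S _ => (commute_ofFn_prod fun i => ?_).symm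
  split_ifs
  exacts [(Commute.one_right _).sub_right (hcomm j i), hcomm j i]

end

/-- For pairwise commuting orthogonal projections `p₁, …, p_N` and all weights
`f, g : {0,…,N} → ℂ`: `f̂ ĝ = (fg)^ = ĝ f̂`, and `f̂` commutes with every `p_j`
and with every `P_{k,N}`. -/
theorem statement3 {H : Type*} [NormedAddCommGroup H] [InnerProductSpace ℂ H]
    [CompleteSpace H] (N : ℕ) (hN : 1 ≤ N) (p : Fin N → (H →L[ℂ] H))
    (hidem : ∀ i, IsIdempotentElem (p i))
    (hsa : ∀ i, IsSelfAdjoint (p i))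
    (hcomm : ∀ i j, Commute (p i) (p j))
    (f g : ℕ → ℂ) :
    hatOp p f * hatOp p g = hatOp p (fun k => f k * g k) ∧
    hatOp p (fun k => f k * g k) = hatOp p g * hatOp p f ∧
    (∀ j : Fin N, Commute (hatOp p f) (p j)) ∧
    (∀ k : ℕ, k ≤ N → Commute (hatOp p f) (symProj p k)) := by
  refine ⟨hatOp_mul_hatOp hidem hcomm f g, ?_, fun j => ?_, fun k _ => ?_⟩
  · rw [hatOp_mul_hatOp hidem hcomm g f]
    simp only [mul_comm]
  · exact commute_hatOp (fun k => commute_symProj hcomm k j) f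
  · refine commute_hatOp (fun l => ?_) f
    rw [commute_iff_eq, symProj_mul_symProj hidem hcomm, symProj_mul_symProj hidem hcomm]
    grind
end

section
/- Let N ≥ 1 be a natural number, C > 0, and let f : {0, 1, …, N} → ℝ satisfy f(0) = 0 and N · k · (f(k) − f(k−1))² ≤ C for every k ∈ {1, …, N}. Then f(k) ≤ 2√C · √(k/N) for every k ∈ {0, …, N}. -/
/-!
Induction on `k`, comparing increments. With `a = √((k+1)/N)` and `b = √(k/N)`, the hypothesis
bounds the increment of `f` by `√C / (N a)`. Since `N (a² - b²) = 1` and `a + b ≤ 2a`, this is at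
most `2 √C (a - b)`, the increment of the claimed upper bound; the increments telescope from
`f 0 = 0`.
-/


/-- Quantitative uniqueness lemma for the weight function `k ↦ √(k/N)`:
if `f 0 = 0` and the increments satisfy `(f k − f (k−1))² ≤ C/(N k)` for
`1 ≤ k ≤ N`, then `f k ≤ 2 √C √(k/N)` on `{0, …, N}`. -/
theorem statement11 (N : ℕ) (hN : 1 ≤ N) (C : ℝ) (hC : 0 < C) (f : ℕ → ℝ)
    (hf0 : f 0 = 0)
    (hinc : ∀ k : ℕ, 1 ≤ k → k ≤ N → (N : ℝ) * (k : ℝ) * (f k - f (k - 1)) ^ 2 ≤ C) :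
    ∀ k : ℕ, k ≤ N → f k ≤ 2 * Real.sqrt C * Real.sqrt ((k : ℝ) / (N : ℝ)) := by
  have hN' : (0 : ℝ) < N := by exact_mod_cast hN
  intro k
  induction k with
  | zero => intro _; simp [hf0]
  | succ k ih =>
    intro hk
    have hprev := ih (by omega)
    have hd := hinc (k + 1) (by omega) hk
    rw [Nat.add_sub_cancel] at hd
    set d := f (k + 1) - f k with hd_def
    set s := √C
    set a := √(((k + 1 : ℕ) : ℝ) / N) with ha_def
    set b := √((k : ℝ) / N) with hb_def
    have hs : 0 ≤ s := Real.sqrt_nonneg _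
    have hs2 : s ^ 2 = C := Real.sq_sqrt hC.le
    have ha : 0 < a := Real.sqrt_pos.mpr (by positivity)
    have ha2 : N * a ^ 2 = k + 1 := by
      rw [ha_def, Real.sq_sqrt (by positivity)]
      push_cast
      field_simp
    have hb2 : N * b ^ 2 = k := by
      rw [hb_def, Real.sq_sqrt (by positivity)]
      field_simp
    have hNad : N * a * d ≤ s := by
      refine abs_le_of_sq_le_sq' ?_ hs |>.2
      push_cast at hd
      rw [← ha2] at hd
      linarith [show (N * a * d) ^ 2 = N * (N * a ^ 2) * d ^ 2 by ring]
    -- `2a(a - b) = (a² - b²) + (a - b)²`, and `N (a² - b²) = 1`.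
    have hgap : 1 ≤ N * a * (2 * (a - b)) := by
      nlinarith [mul_nonneg hN'.le (sq_nonneg (a - b))]
    have hstep : d ≤ 2 * s * (a - b) := by
      refine le_of_mul_le_mul_left ?_ (mul_pos hN' ha)
      calc N * a * d ≤ s := hNad
        _ ≤ s * (N * a * (2 * (a - b))) := le_mul_of_one_le_right hs hgap
        _ = N * a * (2 * s * (a - b)) := by ring
    linarith
end

section
/- There exists a constant C > 0 such that for every ε ∈ (0, 1], ∫_{B₁(0)} ∫_{−1}^{1} ( 1/|x| − 1/√(|x|² + ε² y²) ) dy dx ≤ C ε, where B₁(0) is the closed unit ball in ℝ² and the (nonnegative) integrand is integrated with respect to Lebesgue measure on ℝ² × ℝ. -/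
open MeasureTheory

/-!
For `|y| ≤ 1` the integrand is at most `1/|x| - 1/√(|x|² + ε²)`, which no longer depends on `y`.
Integrating this radial majorant over the unit disc in polar coordinates, the Jacobian `r` cancels
the singularity and leaves
`2π ∫₀¹ (1 - r/√(r² + ε²)) dr = 2π (1 + ε - √(1 + ε²)) ≤ 2π ε`.
The `y`-interval has length `2`, so `C = 4π` works.
-/

/-- The integrand at `|y| = 1` as a function of `r = |x|`, cut off to `0 < r ≤ 1`. Excluding `r = 0`,
where `1 / 0 = 0` would make the difference negative, keeps it nonnegative everywhere. -/
noncomputable def radialMajorant (ε : ℝ) : ℝ → ℝ :=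
  (Set.Ioc (0 : ℝ) 1).indicator fun r => 1 / r - 1 / √(r ^ 2 + ε ^ 2)

lemma radialMajorant_nonneg (ε r : ℝ) : 0 ≤ radialMajorant ε r := by
  refine Set.indicator_nonneg (fun r hr => ?_) r
  have hr0 : 0 < r := hr.1
  have : 1 / √(r ^ 2 + ε ^ 2) ≤ 1 / r := by
    gcongr
    exact Real.le_sqrt_of_sq_le (by nlinarith [sq_nonneg ε])
  linarith

lemma ofReal_le_radialMajorant {ε r y : ℝ} (hε : 0 < ε) (hr0 : 0 ≤ r) (hr1 : r ≤ 1)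
    (hy : y ∈ Set.Icc (-1 : ℝ) 1) :
    ENNReal.ofReal (1 / r - 1 / √(r ^ 2 + ε ^ 2 * y ^ 2)) ≤
      ENNReal.ofReal (radialMajorant ε r) := by
  apply ENNReal.ofReal_le_ofReal
  rcases hr0.eq_or_lt with rfl | hr
  · have h : 0 ≤ 1 / √((0 : ℝ) ^ 2 + ε ^ 2 * y ^ 2) := by positivity
    have := radialMajorant_nonneg ε 0
    rw [div_zero]
    linarith
  · rw [radialMajorant, Set.indicator_of_mem (Set.mem_Ioc.2 ⟨hr, hr1⟩)]
    have hy2 : y ^ 2 ≤ 1 := by nlinarith [hy.1, hy.2]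
    have : ε ^ 2 * y ^ 2 ≤ ε ^ 2 := mul_le_of_le_one_right (by positivity) hy2
    gcongr

/-- The Jacobian factor `r` removes the singularity of the majorant. -/
lemma smul_radialMajorant (ε : ℝ) :
    (fun r : ℝ => r ^ (2 - 1) • radialMajorant ε r) =
      (Set.Ioc (0 : ℝ) 1).indicator fun r => 1 - r / √(r ^ 2 + ε ^ 2) := by
  funext r
  by_cases hr : r ∈ Set.Ioc (0 : ℝ) 1
  · have hr0 : r ≠ 0 := hr.1.ne'
    simp only [radialMajorant, Set.indicator_of_mem hr, smul_eq_mul]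
    rw [mul_sub, Nat.add_one_sub_one, pow_one, mul_one_div_cancel hr0, mul_one_div]
  · simp [radialMajorant, hr]

lemma continuous_radial_density {ε : ℝ} (hε : 0 < ε) :
    Continuous fun r : ℝ => 1 - r / √(r ^ 2 + ε ^ 2) := by
  have h : ∀ r : ℝ, √(r ^ 2 + ε ^ 2) ≠ 0 := fun r => by positivity
  fun_prop (disch := exact h _)

lemma integral_radial_density {ε : ℝ} (hε : 0 < ε) :
    ∫ r in (0 : ℝ)..1, (1 - r / √(r ^ 2 + ε ^ 2)) = 1 + ε - √(1 + ε ^ 2) := by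
  have hd : ∀ r ∈ Set.uIcc (0 : ℝ) 1,
      HasDerivAt (fun r => r - √(r ^ 2 + ε ^ 2)) (1 - r / √(r ^ 2 + ε ^ 2)) r := by
    intro r _
    have h0 : r ^ 2 + ε ^ 2 ≠ 0 := by positivity
    have h := (hasDerivAt_id' r).sub ((((hasDerivAt_id' r).pow 2).add_const (ε ^ 2)).sqrt h0)
    refine h.congr_deriv ?_
    simp only [Nat.cast_ofNat, Nat.add_one_sub_one, pow_one, mul_one, Pi.pow_apply]
    rw [mul_div_mul_left _ _ two_ne_zero]
  rw [intervalIntegral.integral_eq_sub_of_hasDerivAt hd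
    ((continuous_radial_density hε).intervalIntegrable _ _)]
  simp [Real.sqrt_sq hε.le]
  ring

lemma lintegral_radialMajorant_le {ε : ℝ} (hε : 0 < ε) :
    ∫⁻ x : EuclideanSpace ℝ (Fin 2), ENNReal.ofReal (radialMajorant ε ‖x‖) ≤
      ENNReal.ofReal (2 * Real.pi * ε) := by
  have hint : Integrable (fun x : EuclideanSpace ℝ (Fin 2) => radialMajorant ε ‖x‖) := by
    rw [integrable_fun_norm_addHaar volume (f := radialMajorant ε), finrank_euclideanSpace_fin,
      smul_radialMajorant]
    refine (IntegrableOn.integrable_indicator ?_ measurableSet_Ioc).integrableOn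
    exact ((continuous_radial_density hε).integrableOn_Icc).mono_set Set.Ioc_subset_Icc_self
  rw [← ofReal_integral_eq_lintegral_ofReal hint (.of_forall fun x => radialMajorant_nonneg ε _)]
  apply ENNReal.ofReal_le_ofReal
  have hvol : (volume : Measure (EuclideanSpace ℝ (Fin 2))).real (Metric.ball 0 1) = Real.pi := by
    simp [Measure.real, EuclideanSpace.volume_ball_fin_two, Real.pi_pos.le]
  rw [integral_fun_norm_addHaar volume (radialMajorant ε), finrank_euclideanSpace_fin,
    smul_radialMajorant, hvol, setIntegral_indicator measurableSet_Ioc,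
    Set.inter_eq_right.2 Set.Ioc_subset_Ioi_self,
    ← intervalIntegral.integral_of_le zero_le_one, integral_radial_density hε]
  have : 1 ≤ √(1 + ε ^ 2) := Real.one_le_sqrt.2 (by nlinarith)
  rw [nsmul_eq_mul, smul_eq_mul, Nat.cast_ofNat, mul_assoc]
  gcongr
  linarith

/-- L¹ part of the approximation of the scaled Coulomb potential by `1/|x|`:
there is a constant `C > 0` such that for every `ε ∈ (0,1]`,
`∫_{B₁(0)} ∫_{−1}^{1} (1/|x| − 1/√(|x|² + ε²y²)) dy dx ≤ C ε`. -/
theorem statement17 :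
    ∃ C : ℝ, 0 < C ∧
      ∀ ε : ℝ, 0 < ε → ε ≤ 1 →
        ∫⁻ x in Metric.closedBall (0 : EuclideanSpace ℝ (Fin 2)) 1,
          ∫⁻ y in Set.Icc (-1 : ℝ) 1,
            ENNReal.ofReal (1 / ‖x‖ - 1 / Real.sqrt (‖x‖ ^ 2 + ε ^ 2 * y ^ 2))
          ≤ ENNReal.ofReal (C * ε) := by
  refine ⟨4 * Real.pi, by positivity, fun ε hε _ => ?_⟩
  calc
    _ ≤ ∫⁻ x in Metric.closedBall (0 : EuclideanSpace ℝ (Fin 2)) 1,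
          ∫⁻ _ in Set.Icc (-1 : ℝ) 1, ENNReal.ofReal (radialMajorant ε ‖x‖) := by
      refine setLIntegral_mono' Metric.isClosed_closedBall.measurableSet fun x hx => ?_
      exact setLIntegral_mono' measurableSet_Icc fun y hy =>
        ofReal_le_radialMajorant hε (norm_nonneg x) (mem_closedBall_zero_iff.1 hx) hy
    _ ≤ ∫⁻ x : EuclideanSpace ℝ (Fin 2),
          ∫⁻ _ in Set.Icc (-1 : ℝ) 1, ENNReal.ofReal (radialMajorant ε ‖x‖) :=
      setLIntegral_le_lintegral _ _
    _ = (∫⁻ x : EuclideanSpace ℝ (Fin 2), ENNReal.ofReal (radialMajorant ε ‖x‖)) *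
          ENNReal.ofReal 2 := by
      simp_rw [setLIntegral_const, Real.volume_Icc]
      rw [lintegral_mul_const' _ _ ENNReal.ofReal_ne_top]
      norm_num
    _ ≤ ENNReal.ofReal (2 * Real.pi * ε) * ENNReal.ofReal 2 := by
      gcongr
      exact lintegral_radialMajorant_le hε
    _ = ENNReal.ofReal (4 * Real.pi * ε) := by
      rw [← ENNReal.ofReal_mul (by positivity)]
      congr 1
      ring
end

section
/- There exists a constant C > 0 such that for every ε ∈ (0, 1], ∫_{B₁(0)} ∫_{−1}^{1} ( |x|² + ε² y² )^{−1} dy dx ≤ C · ( 1 + log(1/ε) ), where B₁(0) is the closed unit ball in ℝ²; i.e. the squared scaled Coulomb singularity diverges at most logarithmically as ε → 0. -/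
open MeasureTheory

/-!
After Tonelli, the slice at height `y ≠ 0` is an integral over the unit disc which polar
coordinates evaluate exactly: with `a = ε²y² ≤ 1`,
`∫_{B₁} (|x|² + a)⁻¹ dx = π (log (1 + a) - log a) ≤ π (log 2 - 2 log ε - 2 log |y|)`.
Since `log |y|` is integrable on `[-1, 1]` with integral `-2`, the total is at most
`π (2 log 2 + 4 log (1/ε) + 4) ≤ 6π (1 + log (1/ε))`.
-/

/-- The radial integral produced by polar coordinates in the disc. -/
lemma radial_integral {a : ℝ} (ha : 0 < a) :
    ∫ r in (0 : ℝ)..1, r * (r ^ 2 + a)⁻¹ = (Real.log (1 + a) - Real.log a) / 2 := by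
  have hpos : ∀ r : ℝ, 0 < r ^ 2 + a := fun r => by positivity
  have hd : ∀ r ∈ Set.uIcc (0 : ℝ) 1,
      HasDerivAt (fun r : ℝ => Real.log (r ^ 2 + a) / 2) (r * (r ^ 2 + a)⁻¹) r := by
    intro r _
    have h := (((hasDerivAt_pow 2 r).add_const a).log (hpos r).ne').div_const 2
    refine h.congr_deriv ?_
    norm_num
    ring
  have hc : Continuous fun r : ℝ => r * (r ^ 2 + a)⁻¹ :=
    continuous_id.mul (Continuous.inv₀ (by fun_prop) fun r => (hpos r).ne')
  rw [intervalIntegral.integral_eq_sub_of_hasDerivAt hd (hc.intervalIntegrable _ _)]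
  norm_num
  ring

lemma disc_integral {a : ℝ} (ha : 0 < a) :
    ∫ x in Metric.closedBall (0 : EuclideanSpace ℝ (Fin 2)) 1, (‖x‖ ^ 2 + a)⁻¹
      = Real.pi * (Real.log (1 + a) - Real.log a) := by
  have h := integral_fun_norm_addHaar (volume : Measure (EuclideanSpace ℝ (Fin 2)))
    ((Set.Iic (1 : ℝ)).indicator fun r => (r ^ 2 + a)⁻¹)
  have h1 : ∫ x in Metric.closedBall (0 : EuclideanSpace ℝ (Fin 2)) 1, (‖x‖ ^ 2 + a)⁻¹
      = ∫ x : EuclideanSpace ℝ (Fin 2),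
        (Set.Iic (1 : ℝ)).indicator (fun r => (r ^ 2 + a)⁻¹) ‖x‖ := by
    rw [← integral_indicator measurableSet_closedBall]
    congr 1 with x
    simp [Set.indicator]
  have h2 : ∫ r in Set.Ioi (0 : ℝ), r ^ (2 - 1) •
      (Set.Iic (1 : ℝ)).indicator (fun r => (r ^ 2 + a)⁻¹) r
      = ∫ r in (0 : ℝ)..1, r * (r ^ 2 + a)⁻¹ := by
    rw [intervalIntegral.integral_of_le zero_le_one, ← Set.Ioi_inter_Iic,
      ← setIntegral_indicator measurableSet_Iic]
    congr 1 with r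
    by_cases hr : r ≤ 1 <;> simp [Set.indicator, hr]
  have hvol : (volume : Measure (EuclideanSpace ℝ (Fin 2))).real (Metric.ball 0 1)
      = Real.pi := by
    simp [Measure.real, EuclideanSpace.volume_ball_fin_two, Real.pi_pos.le]
  rw [finrank_euclideanSpace_fin, h2, hvol, radial_integral ha] at h
  rw [h1, h]
  simp only [nsmul_eq_mul, smul_eq_mul]
  push_cast
  ring

lemma disc_lintegral_le {ε y : ℝ} (hε : 0 < ε) (hε1 : ε ≤ 1) (hy : y ≠ 0)
    (hy1 : y ∈ Set.Icc (-1 : ℝ) 1) :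
    ∫⁻ x in Metric.closedBall (0 : EuclideanSpace ℝ (Fin 2)) 1,
        ENNReal.ofReal ((‖x‖ ^ 2 + ε ^ 2 * y ^ 2)⁻¹)
      ≤ ENNReal.ofReal (Real.pi * (Real.log 2 - 2 * Real.log ε - 2 * Real.log y)) := by
  have hy2 : 0 < y ^ 2 := by positivity
  have ha : 0 < ε ^ 2 * y ^ 2 := by positivity
  have ha1 : ε ^ 2 * y ^ 2 ≤ 1 :=
    mul_le_one₀ (pow_le_one₀ hε.le hε1) hy2.le
      ((sq_le_one_iff_abs_le_one y).2 (abs_le.2 hy1))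
  have hc : Continuous fun x : EuclideanSpace ℝ (Fin 2) => (‖x‖ ^ 2 + ε ^ 2 * y ^ 2)⁻¹ :=
    Continuous.inv₀ (by fun_prop) fun x => by positivity
  rw [← ofReal_integral_eq_lintegral_ofReal
    (hc.continuousOn.integrableOn_compact (isCompact_closedBall _ _))
    (Filter.Eventually.of_forall fun x => by positivity), disc_integral ha]
  apply ENNReal.ofReal_le_ofReal
  have h1 : Real.log (1 + ε ^ 2 * y ^ 2) ≤ Real.log 2 :=
    Real.log_le_log (by positivity) (by linarith)
  have h2 : Real.log (ε ^ 2 * y ^ 2) = 2 * Real.log ε + 2 * Real.log y := by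
    rw [Real.log_mul (by positivity) hy2.ne', Real.log_pow, Real.log_pow]
    norm_num
  exact mul_le_mul_of_nonneg_left (by linarith) Real.pi_pos.le

/-- The squared scaled Coulomb singularity diverges at most logarithmically:
there is `C > 0` such that for all `ε ∈ (0,1]`,
`∫_{B₁(0)} ∫_{−1}^{1} (|x|² + ε²y²)^{−1} dy dx ≤ C (1 + log(1/ε))`. -/
theorem statement19 :
    ∃ C : ℝ, 0 < C ∧
      ∀ ε : ℝ, 0 < ε → ε ≤ 1 →
        ∫⁻ x in Metric.closedBall (0 : EuclideanSpace ℝ (Fin 2)) 1,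
          ∫⁻ y in Set.Icc (-1 : ℝ) 1,
            ENNReal.ofReal ((‖x‖ ^ 2 + ε ^ 2 * y ^ 2)⁻¹)
          ≤ ENNReal.ofReal (C * (1 + Real.log (1 / ε))) := by
  refine ⟨6 * Real.pi, by positivity, fun ε hε hε1 => ?_⟩
  have hmeas : Measurable fun p : EuclideanSpace ℝ (Fin 2) × ℝ =>
      ENNReal.ofReal ((‖p.1‖ ^ 2 + ε ^ 2 * p.2 ^ 2)⁻¹) := by fun_prop
  rw [lintegral_lintegral_swap hmeas.aemeasurable]
  have hlogε : Real.log ε ≤ 0 := Real.log_nonpos hε.le hε1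
  have hlog2 : 0 < Real.log 2 := Real.log_pos one_lt_two
  have hlogI : IntervalIntegrable (fun y : ℝ => 2 * Real.log y) volume (-1) 1 :=
    intervalIntegral.intervalIntegrable_log'.const_mul 2
  have hcI : IntervalIntegrable (fun _ : ℝ => Real.log 2 - 2 * Real.log ε) volume (-1) 1 :=
    intervalIntegrable_const
  have hint : IntegrableOn
      (fun y : ℝ => Real.pi * (Real.log 2 - 2 * Real.log ε - 2 * Real.log y))
      (Set.Icc (-1) 1) :=
    (intervalIntegrable_iff_integrableOn_Icc_of_le (by norm_num)).1
      ((hcI.sub hlogI).const_mul Real.pi)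
  have hval : ∫ y in Set.Icc (-1 : ℝ) 1,
      Real.pi * (Real.log 2 - 2 * Real.log ε - 2 * Real.log y)
      = Real.pi * (2 * Real.log 2 - 4 * Real.log ε + 4) := by
    rw [integral_Icc_eq_integral_Ioc, ← intervalIntegral.integral_of_le (by norm_num),
      intervalIntegral.integral_const_mul, intervalIntegral.integral_sub hcI hlogI,
      intervalIntegral.integral_const_mul, integral_log, intervalIntegral.integral_const]
    simp
    ring
  calc
    _ ≤ ∫⁻ y in Set.Icc (-1 : ℝ) 1,
        ENNReal.ofReal (Real.pi * (Real.log 2 - 2 * Real.log ε - 2 * Real.log y)) := by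
      apply lintegral_mono_ae
      -- At `y = 0` the slice integral is infinite, so the null set `{0}` must be discarded.
      filter_upwards [ae_restrict_mem measurableSet_Icc,
        ae_restrict_of_ae (Measure.ae_ne volume (0 : ℝ))] with y hy hy0
      exact disc_lintegral_le hε hε1 hy0 hy
    _ = ENNReal.ofReal (Real.pi * (2 * Real.log 2 - 4 * Real.log ε + 4)) := by
      rw [← hval, ofReal_integral_eq_lintegral_ofReal hint]
      filter_upwards [ae_restrict_mem measurableSet_Icc] with y hy
      -- `Real.log y = Real.log |y|`, hence the sign is right for negative `y` as well.
      have hly : Real.log y ≤ 0 := by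
        rw [← Real.log_abs]
        exact Real.log_nonpos (abs_nonneg y) (abs_le.2 hy)
      exact mul_nonneg Real.pi_pos.le (by linarith)
    _ ≤ _ := by
      apply ENNReal.ofReal_le_ofReal
      rw [one_div, Real.log_inv, mul_comm 6 Real.pi, mul_assoc]
      have := Real.log_two_lt_d9
      exact mul_le_mul_of_nonneg_left (by linarith) Real.pi_pos.le
end
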